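/- Let E be a uniformly convex real Banach space satisfying Opial's condition, C a nonempty closed convex subset of E, and T a nonexpansive self-mapping of C with nonempty fixed point set F(T). Let {λₙ} ⊆ [0,1] and {γₙ} ⊆ [a,1] with 0 < a ≤ 1, suppose liminf λₙ(1−λₙ) > 0, and define the Ishikawa sequence by x₁ = x ∈ C, yₙ = (1−λₙ)xₙ + λₙTxₙ, x_{n+1} = (1−γₙ)xₙ + γₙTyₙ. Then {xₙ} converges weakly to some point x₀ ∈ F(T). -/

import Mathlib

open Filter Topology

/-- Vectors of norm almost at most `r` whose sum has norm almost `2 * r` are close together. -/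
theorem UniformConvexSpace.exists_norm_sub_le_of_le_norm_add
    {E : Type*} [NormedAddCommGroup E] [NormedSpace ℝ E] [UniformConvexSpace E]
    {r ε : ℝ} (hr : 0 ≤ r) (hε : 0 < ε) :
    ∃ η > 0, ∀ u v : E, ‖u‖ ≤ r + η → ‖v‖ ≤ r + η → 2 * (r - η) ≤ ‖u + v‖ → ‖u - v‖ ≤ ε := by
  rcases hr.eq_or_lt with rfl | hr
  · refine ⟨ε / 2, by positivity, fun u v hu hv _ => ?_⟩
    linarith [norm_sub_le u v]
  · obtain ⟨δ, hδ, h⟩ := exists_forall_closed_ball_dist_add_le_two_sub E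
      (show 0 < ε / (2 * r) by positivity)
    refine ⟨min r (δ * r / 8), by positivity, fun u v hu hv huv => ?_⟩
    set η := min r (δ * r / 8)
    have hη₀ : 0 < η := by positivity
    have hη₁ : η ≤ r := min_le_left _ _
    have hη₂ : η ≤ δ * r / 8 := min_le_right _ _
    have hR : 0 < r + η := by positivity
    by_contra! hlt
    have hscale (w : E) : ‖(r + η)⁻¹ • w‖ = ‖w‖ / (r + η) := by
      rw [norm_smul_of_nonneg (inv_nonneg.2 hR.le), inv_mul_eq_div]
    have key := @h ((r + η)⁻¹ • u) (by rw [hscale, div_le_one hR]; exact hu)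
      ((r + η)⁻¹ • v) (by rw [hscale, div_le_one hR]; exact hv) (by
        rw [← smul_sub, hscale]
        exact div_le_div₀ (norm_nonneg _) hlt.le hR (by linarith))
    rw [← smul_add, hscale, div_le_iff₀ hR] at key
    nlinarith [mul_pos hδ hr, mul_pos hδ hη₀]

/-- In a uniformly convex Banach space, the closed convex sets which eventually contain a bounded
family have a common point. -/
theorem UniformConvexSpace.exists_forall_mem_of_eventually_mem
    {E : Type*} [NormedAddCommGroup E] [NormedSpace ℝ E] [CompleteSpace E] [UniformConvexSpace E]
    {ι : Type*} {l : Filter ι} [l.NeBot] {x : ι → E} {B : ℝ} (hB : ∀ᶠ i in l, ‖x i‖ ≤ B) :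
    ∃ q, ∀ K : Set E, IsClosed K → Convex ℝ K → (∀ᶠ i in l, x i ∈ K) → q ∈ K := by
  set S : Set (Set E) := {K | IsClosed K ∧ Convex ℝ K ∧ ∀ᶠ i in l, x i ∈ K}
  have hne {K : Set E} (hK : K ∈ S) : K.Nonempty := by
    obtain ⟨i, hi⟩ := hK.2.2.exists
    exact ⟨x i, hi⟩
  have hinter {K L : Set E} (hK : K ∈ S) (hL : L ∈ S) : K ∩ L ∈ S :=
    ⟨hK.1.inter hL.1, hK.2.1.inter hL.2.1, hK.2.2.and hL.2.2⟩
  have huniv : Set.univ ∈ S := ⟨isClosed_univ, convex_univ, by simp⟩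
  have hbdd : BddAbove ((fun K => Metric.infDist 0 K) '' S) := by
    refine ⟨B, ?_⟩
    rintro _ ⟨K, hK, rfl⟩
    obtain ⟨i, hi, hiB⟩ := (hK.2.2.and hB).exists
    exact (Metric.infDist_le_dist_of_mem hi).trans (by simpa using hiB)
  set r := sSup ((fun K => Metric.infDist 0 K) '' S)
  have hle {K : Set E} (hK : K ∈ S) : Metric.infDist 0 K ≤ r :=
    le_csSup hbdd (Set.mem_image_of_mem _ hK)
  have hr₀ : 0 ≤ r := Metric.infDist_nonneg.trans (hle huniv)
  let F : Filter E :=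
    { sets := {s | ∃ K ∈ S, ∃ η > 0, K ∩ Metric.closedBall 0 (r + η) ⊆ s}
      univ_sets := ⟨_, huniv, 1, one_pos, Set.subset_univ _⟩
      sets_of_superset := fun ⟨K, hK, η, hη, h⟩ hst => ⟨K, hK, η, hη, h.trans hst⟩
      inter_sets := by
        rintro s t ⟨K, hK, η, hη, hs⟩ ⟨L, hL, θ, hθ, ht⟩
        refine ⟨K ∩ L, hinter hK hL, min η θ, lt_min hη hθ, fun z hz => ⟨hs ⟨hz.1.1, ?_⟩,
          ht ⟨hz.1.2, ?_⟩⟩⟩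
        · exact Metric.closedBall_subset_closedBall (by gcongr; exact min_le_left _ _) hz.2
        · exact Metric.closedBall_subset_closedBall (by gcongr; exact min_le_right _ _) hz.2 }
  have hmem {K : Set E} (hK : K ∈ S) {η : ℝ} (hη : 0 < η) :
      K ∩ Metric.closedBall 0 (r + η) ∈ F := ⟨K, hK, η, hη, subset_rfl⟩
  have hF : Cauchy F := by
    refine Metric.cauchy_iff.2 ⟨⟨fun hbot => ?_⟩, fun ε hε => ?_⟩
    · obtain ⟨K, hK, η, hη, h⟩ : ∅ ∈ F := by simp [hbot]
      obtain ⟨z, hz, hzr⟩ := (Metric.infDist_lt_iff (x := 0) (hne hK)).1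
        ((hle hK).trans_lt (lt_add_of_pos_right r hη))
      exact h ⟨hz, by simpa using hzr.le⟩
    · obtain ⟨η, hη, h⟩ := exists_norm_sub_le_of_le_norm_add (E := E) hr₀ (half_pos hε)
      obtain ⟨_, ⟨K, hK, rfl⟩, hKr⟩ := exists_lt_of_lt_csSup ⟨_, Set.mem_image_of_mem _ huniv⟩
        (show r - η < r by linarith)
      refine ⟨_, hmem hK hη, fun u hu v hv => ?_⟩
      rw [dist_eq_norm]
      refine (h u v (by simpa using hu.2) (by simpa using hv.2) ?_).trans_lt (half_lt_self hε)
      have hmid := Metric.infDist_le_dist_of_mem (x := 0) (hK.2.1.midpoint_mem hu.1 hv.1)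
      rw [dist_zero_left, midpoint_eq_smul_add, norm_smul] at hmid
      norm_num at hmid
      simp only at hKr
      linarith
  obtain ⟨q, hq⟩ := CompleteSpace.complete hF
  have := hF.1
  refine ⟨q, fun K hcl hcv hev => hcl.mem_of_tendsto (f := id) (b := F) hq ?_⟩
  exact mem_of_superset (hmem ⟨hcl, hcv, hev⟩ one_pos) Set.inter_subset_left

/-- Along an ultrafilter, a bounded family in a uniformly convex Banach space converges weakly, and
its limit lies in every closed convex set eventually containing the family. -/
theorem UniformConvexSpace.exists_weak_limit_ultrafilter
    {E : Type*} [NormedAddCommGroup E] [NormedSpace ℝ E] [CompleteSpace E] [UniformConvexSpace E]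
    {ι : Type*} (U : Ultrafilter ι) {x : ι → E} {B : ℝ} (hB : ∀ i, ‖x i‖ ≤ B) :
    ∃ q, (∀ f : E →L[ℝ] ℝ, Tendsto (fun i => f (x i)) U (𝓝 (f q))) ∧
      ∀ K : Set E, IsClosed K → Convex ℝ K → (∀ i, x i ∈ K) → q ∈ K := by
  obtain ⟨q, hq⟩ := exists_forall_mem_of_eventually_mem (l := (U : Filter ι))
    (Eventually.of_forall hB)
  refine ⟨q, fun f => ?_, fun K hcl hcv hK => hq K hcl hcv (Eventually.of_forall hK)⟩
  obtain ⟨c, -, hc⟩ := (isCompact_closedBall (0 : ℝ) (‖f‖ * B)).ultrafilter_le_nhds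
    (U.map fun i => f (x i)) (by
      refine le_principal_iff.2 (Ultrafilter.mem_map.2 (univ_mem' fun i => ?_))
      simpa using f.le_opNorm_of_le (hB i))
  replace hc : Tendsto (fun i => f (x i)) U (𝓝 c) := hc
  suffices f q = c by rwa [this]
  refine eq_of_forall_dist_le fun ε hε => ?_
  exact hq (f ⁻¹' Metric.closedBall c ε) (Metric.isClosed_closedBall.preimage f.continuous)
    ((convex_closedBall c ε).is_linear_preimage f.toLinearMap.isLinear)
    (hc (Metric.closedBall_mem_nhds c hε))

/-- A bounded sequence in a uniformly convex Banach space has a weakly convergent subsequence, with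
limit in every closed convex set containing the sequence. -/
theorem UniformConvexSpace.exists_weakly_convergent_subseq
    {E : Type*} [NormedAddCommGroup E] [NormedSpace ℝ E] [CompleteSpace E] [UniformConvexSpace E]
    {x : ℕ → E} {B : ℝ} (hB : ∀ n, ‖x n‖ ≤ B) :
    ∃ q, ∃ φ : ℕ → ℕ, StrictMono φ ∧
      (∀ f : E →L[ℝ] ℝ, Tendsto (fun n => f (x (φ n))) atTop (𝓝 (f q))) ∧
      ∀ K : Set E, IsClosed K → Convex ℝ K → (∀ n, x n ∈ K) → q ∈ K := by
  set M : Submodule ℝ E := (Submodule.span ℝ (Set.range x)).topologicalClosure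
  have hxM (n : ℕ) : x n ∈ M :=
    Submodule.le_topologicalClosure _ (Submodule.subset_span ⟨n, rfl⟩)
  have hMcl : IsClosed (M : Set E) := Submodule.isClosed_topologicalClosure _
  obtain ⟨c, hc, hMc⟩ : TopologicalSpace.IsSeparable (M : Set E) :=
    ((Set.countable_range x).isSeparable.span (R := ℝ)).closure
  have := hc.to_subtype
  choose g hg₁ hg₂ using fun w : c => exists_dual_vector'' ℝ (w : E)
  have hsep : ∀ q ∈ M, (∀ w, g w q = 0) → q = 0 := by
    intro q hq h
    rw [← norm_le_zero_iff]
    refine le_of_forall_pos_le_add fun ε hε => ?_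
    obtain ⟨w, hw, hwq⟩ := Metric.mem_closure_iff.1 (hMc hq) (ε / 2) (half_pos hε)
    have hw₁ : ‖w‖ ≤ ‖w - q‖ := by
      have h₁ : g ⟨w, hw⟩ (w - q) = ‖w‖ := by
        rw [map_sub, h, sub_zero]
        exact hg₂ ⟨w, hw⟩
      have h₂ := (g ⟨w, hw⟩).le_of_opNorm_le (hg₁ _) (w - q)
      rw [h₁, norm_norm, one_mul] at h₂
      exact h₂
    rw [dist_eq_norm, norm_sub_rev] at hwq
    have := norm_sub_norm_le q (q - w)
    rw [sub_sub_cancel, norm_sub_rev q w] at this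
    linarith
  obtain ⟨b, -, φ, hφ, hb⟩ := (isCompact_univ_pi fun _ : c => isCompact_closedBall (0 : ℝ) B)
    |>.tendsto_subseq (x := fun n w => g w (x n)) (fun n w _ => by
      simpa using ((g w).le_of_opNorm_le (hg₁ w) (x n)).trans (by simpa using hB n))
  rw [tendsto_pi_nhds] at hb
  have hlim (U : Ultrafilter ℕ) := exists_weak_limit_ultrafilter U (x := x ∘ φ) fun n => hB (φ n)
  have hgq {U : Ultrafilter ℕ} (hU : (U : Filter ℕ) ≤ atTop) {q : E}
      (hq : ∀ f : E →L[ℝ] ℝ, Tendsto (fun n => f ((x ∘ φ) n)) U (𝓝 (f q))) (w : c) :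
      g w q = b w :=
    tendsto_nhds_unique (hq (g w)) ((hb w).mono_left hU)
  obtain ⟨q, hq, hqK⟩ := hlim (hyperfilter ℕ)
  refine ⟨q, φ, hφ, fun f => ?_, fun K hcl hcv hK => hqK K hcl hcv fun n => hK _⟩
  rw [tendsto_iff_ultrafilter]
  intro U hU
  obtain ⟨p, hp, hpK⟩ := hlim U
  have hpq : p = q := by
    refine sub_eq_zero.1 (hsep _ (M.sub_mem (hpK M hMcl M.convex fun n => hxM _)
      (hqK M hMcl M.convex fun n => hxM _)) fun w => ?_)
    rw [map_sub, hgq hU hp, hgq Nat.hyperfilter_le_atTop hq, sub_self]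
  rw [← hpq]
  exact hp f

/-- A quantitative triangle inequality for a convex combination of two vectors. -/
theorem mul_two_mul_norm_sub_norm_add_le
    {E : Type*} [NormedAddCommGroup E] [NormedSpace ℝ E] {u v : E} (huv : ‖v‖ ≤ ‖u‖)
    {t : ℝ} (ht : t ∈ Set.Icc (0 : ℝ) 1) :
    t * (1 - t) * (2 * ‖u‖ - ‖u + v‖) ≤ ‖u‖ - ‖(1 - t) • u + t • v‖ := by
  have hs : ‖u + v‖ ≤ 2 * ‖u‖ := by linarith [norm_add_le u v]
  rcases le_total t (1 / 2) with h | h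
  · have e : (1 - t) • u + t • v = (1 - 2 * t) • u + t • (u + v) := by module
    have := norm_add_le ((1 - 2 * t) • u) (t • (u + v))
    rw [← e, norm_smul_of_nonneg (by linarith), norm_smul_of_nonneg ht.1] at this
    nlinarith [mul_nonneg (mul_nonneg ht.1 ht.1) (sub_nonneg.2 hs)]
  · have e : (1 - t) • u + t • v = (2 * t - 1) • v + (1 - t) • (u + v) := by module
    have := norm_add_le ((2 * t - 1) • v) ((1 - t) • (u + v))
    rw [← e, norm_smul_of_nonneg (by linarith), norm_smul_of_nonneg (by linarith [ht.2])] at this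
    have h1 : 0 ≤ 1 - t := by linarith [ht.2]
    nlinarith [mul_nonneg (mul_nonneg h1 h1) (sub_nonneg.2 hs),
      mul_le_mul_of_nonneg_left huv (show 0 ≤ 2 * t - 1 by linarith)]

/-- Let `E` be a uniformly convex real Banach space satisfying Opial's
condition, `C` a nonempty closed convex subset of `E`, and `T` a nonexpansive self-mapping of
`C` with a fixed point. Then the Ishikawa iteration (with `λₙ ∈ [0,1]`, `γₙ ∈ [a,1]`,
`0 < a ≤ 1`, `liminf λₙ(1−λₙ) > 0`) converges weakly to a fixed point of `T`. -/
theorem ishikawa_nonexpansive_weak_convergence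
    {E : Type*} [NormedAddCommGroup E] [NormedSpace ℝ E] [CompleteSpace E]
    [UniformConvexSpace E]
    (hOpial : ∀ (z : ℕ → E) (u : E),
      (∀ f : E →L[ℝ] ℝ, Tendsto (fun n => f (z n)) atTop (𝓝 (f u))) →
      ∀ v : E, v ≠ u →
        Filter.liminf (fun n => ‖z n - u‖) atTop < Filter.liminf (fun n => ‖z n - v‖) atTop)
    (C : Set E) (hCne : C.Nonempty) (hCcl : IsClosed C) (hCcv : Convex ℝ C)
    (T : E → E) (hTself : Set.MapsTo T C C)
    (hnonexp : ∀ x ∈ C, ∀ y ∈ C, ‖T x - T y‖ ≤ ‖x - y‖)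
    (hF : ∃ p ∈ C, T p = p)
    (a : ℝ) (ha0 : 0 < a) (ha1 : a ≤ 1)
    (lam gam : ℕ → ℝ)
    (hlam : ∀ n, lam n ∈ Set.Icc (0 : ℝ) 1) (hgam : ∀ n, gam n ∈ Set.Icc a 1)
    (hliminf : 0 < Filter.liminf (fun n => lam n * (1 - lam n)) atTop)
    (x y : ℕ → E) (x₀ : E) (hx₀ : x₀ ∈ C) (hinit : x 0 = x₀)
    (hy : ∀ n, y n = (1 - lam n) • x n + lam n • T (x n))
    (hxs : ∀ n, x (n + 1) = (1 - gam n) • x n + gam n • T (y n)) :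
    ∃ p ∈ C, T p = p ∧
      ∀ f : E →L[ℝ] ℝ, Tendsto (fun n => f (x n)) atTop (𝓝 (f p)) := by
  have hyC_of_mem {n : ℕ} (h : x n ∈ C) : y n ∈ C := by
    rw [hy]
    exact hCcv h (hTself h) (by linarith [(hlam n).2]) (hlam n).1 (by ring)
  have hxC (n : ℕ) : x n ∈ C := by
    induction n with
    | zero => rwa [hinit]
    | succ n ih =>
      rw [hxs]
      exact hCcv ih (hTself (hyC_of_mem ih)) (by linarith [(hgam n).2]) (by linarith [(hgam n).1])
        (by ring)
  have hyC (n : ℕ) : y n ∈ C := hyC_of_mem (hxC n)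
  have hstep {p : E} (hp : p ∈ C) (hTp : T p = p) (n : ℕ) :
      a * (lam n * (1 - lam n) * (2 * ‖x n - p‖ - ‖(x n - p) + (T (x n) - p)‖)) ≤
        ‖x n - p‖ - ‖x (n + 1) - p‖ ∧
      0 ≤ 2 * ‖x n - p‖ - ‖(x n - p) + (T (x n) - p)‖ ∧ ‖T (x n) - p‖ ≤ ‖x n - p‖ := by
    have hT {z : E} (hz : z ∈ C) : ‖T z - p‖ ≤ ‖z - p‖ := by
      simpa [hTp] using hnonexp z hz p hp
    have h₁ := mul_two_mul_norm_sub_norm_add_le (hT (hxC n)) (hlam n)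
    have e₁ : (1 - lam n) • (x n - p) + lam n • (T (x n) - p) = y n - p := by
      rw [hy]; module
    have e₂ : x (n + 1) - p = (1 - gam n) • (x n - p) + gam n • (T (y n) - p) := by
      rw [hxs]; module
    have hg₀ : 0 ≤ gam n := ha0.le.trans (hgam n).1
    have h₂ := norm_add_le ((1 - gam n) • (x n - p)) (gam n • (T (y n) - p))
    rw [← e₂, norm_smul_of_nonneg (by linarith [(hgam n).2]), norm_smul_of_nonneg hg₀] at h₂
    have h₃ : 0 ≤ 2 * ‖x n - p‖ - ‖(x n - p) + (T (x n) - p)‖ := by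
      linarith [norm_add_le (x n - p) (T (x n) - p), hT (hxC n)]
    have h₄ : 0 ≤ lam n * (1 - lam n) :=
      mul_nonneg (hlam n).1 (by linarith [(hlam n).2])
    rw [e₁] at h₁
    refine ⟨?_, h₃, hT (hxC n)⟩
    calc _ ≤ gam n * (lam n * (1 - lam n) * (2 * ‖x n - p‖ - ‖(x n - p) + (T (x n) - p)‖)) :=
          mul_le_mul_of_nonneg_right (hgam n).1 (mul_nonneg h₄ h₃)
      _ ≤ gam n * (‖x n - p‖ - ‖y n - p‖) := mul_le_mul_of_nonneg_left h₁ hg₀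
      _ ≤ _ := by nlinarith [mul_le_mul_of_nonneg_left (hT (hyC n)) hg₀]
  have hanti {p : E} (hp : p ∈ C) (hTp : T p = p) : Antitone fun n => ‖x n - p‖ := by
    refine antitone_nat_of_succ_le fun n => ?_
    obtain ⟨h₁, h₂, -⟩ := hstep hp hTp n
    have h₄ : 0 ≤ lam n * (1 - lam n) :=
      mul_nonneg (hlam n).1 (by linarith [(hlam n).2])
    linarith [mul_nonneg ha0.le (mul_nonneg h₄ h₂)]
  have hlimit {p : E} (hp : p ∈ C) (hTp : T p = p) :
      ∃ d, 0 ≤ d ∧ Tendsto (fun n => ‖x n - p‖) atTop (𝓝 d) :=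
    ⟨_, le_ciInf fun n => norm_nonneg _, tendsto_atTop_ciInf (hanti hp hTp)
      ⟨0, by rintro _ ⟨n, rfl⟩; exact norm_nonneg _⟩⟩
  obtain ⟨p₀, hp₀, hTp₀⟩ := hF
  have hB (n : ℕ) : ‖x n‖ ≤ ‖x 0 - p₀‖ + ‖p₀‖ := by
    have h₁ := hanti hp₀ hTp₀ (Nat.zero_le n)
    have h₂ := norm_add_le (x n - p₀) p₀
    rw [sub_add_cancel] at h₂
    exact h₂.trans (by gcongr)
  have hreg : Tendsto (fun n => ‖x n - T (x n)‖) atTop (𝓝 0) := by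
    obtain ⟨d, hd, hlim⟩ := hlimit hp₀ hTp₀
    obtain ⟨b, hb, hbl⟩ := exists_between hliminf
    have hev := eventually_lt_of_lt_liminf hbl
      (isBoundedUnder_of ⟨0, fun n => mul_nonneg (hlam n).1 (by linarith [(hlam n).2])⟩)
    have hdiff : Tendsto (fun n => (‖x n - p₀‖ - ‖x (n + 1) - p₀‖) / (a * b)) atTop (𝓝 0) := by
      simpa using (hlim.sub (hlim.comp (tendsto_add_atTop_nat 1))).div_const (a * b)
    have hgap : Tendsto (fun n => 2 * ‖x n - p₀‖ - ‖(x n - p₀) + (T (x n) - p₀)‖) atTop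
        (𝓝 0) := by
      refine tendsto_of_tendsto_of_tendsto_of_le_of_le' tendsto_const_nhds hdiff
        (Eventually.of_forall fun n => (hstep hp₀ hTp₀ n).2.1) ?_
      filter_upwards [hev] with n hn
      obtain ⟨h₁, h₂, -⟩ := hstep hp₀ hTp₀ n
      rw [le_div_iff₀ (mul_pos ha0 hb)]
      nlinarith [mul_le_mul_of_nonneg_left (mul_le_mul_of_nonneg_right hn.le h₂) ha0.le]
    have hsum : Tendsto (fun n => ‖(x n - p₀) + (T (x n) - p₀)‖) atTop (𝓝 (2 * d)) := by
      simpa using (hlim.const_mul 2).sub hgap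
    rw [Metric.tendsto_nhds]
    intro ε hε
    obtain ⟨η, hη, h⟩ :=
      UniformConvexSpace.exists_norm_sub_le_of_le_norm_add (E := E) hd (half_pos hε)
    filter_upwards [hlim.eventually_lt_const (show d < d + η by linarith),
      hsum.eventually_const_lt (show 2 * (d - η) < 2 * d by linarith)] with n h₁ h₂
    have := h _ _ h₁.le ((hstep hp₀ hTp₀ n).2.2.trans h₁.le) h₂.le
    rw [sub_sub_sub_cancel_right] at this
    rw [dist_zero_right, norm_norm]
    linarith
  have hdemi {φ : ℕ → ℕ} (hφ : Tendsto φ atTop atTop) {q : E} (hq : q ∈ C)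
      (hw : ∀ f : E →L[ℝ] ℝ, Tendsto (fun n => f (x (φ n))) atTop (𝓝 (f q))) : T q = q := by
    by_contra hne
    obtain ⟨c, hc₁, hc₂⟩ := exists_between (hOpial (x ∘ φ) q hw (T q) hne)
    obtain ⟨c', hc'₁, hc'₂⟩ := exists_between hc₁
    have hfreq := frequently_lt_of_liminf_lt (isCoboundedUnder_ge_of_le atTop
      (x := ‖x 0 - p₀‖ + ‖p₀‖ + ‖q‖) fun n =>
        (norm_sub_le _ _).trans (add_le_add_left (hB (φ n)) _)) hc'₁
    have hev := eventually_lt_of_lt_liminf hc₂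
      (isBoundedUnder_of ⟨0, fun n => norm_nonneg _⟩)
    obtain ⟨n, h₁, h₂, h₃⟩ := (hfreq.and_eventually
      (hev.and ((hreg.comp hφ).eventually_lt_const (sub_pos.2 hc'₂)))).exists
    have h₄ := norm_sub_le_norm_sub_add_norm_sub (x (φ n)) (T (x (φ n))) (T q)
    have h₅ := hnonexp _ (hxC (φ n)) q hq
    simp only [Function.comp_apply] at h₁ h₂ h₃
    linarith
  have hlt {φ : ℕ → ℕ} (hφ : Tendsto φ atTop atTop) {p q : E} {d e : ℝ}
      (hw : ∀ f : E →L[ℝ] ℝ, Tendsto (fun n => f (x (φ n))) atTop (𝓝 (f p))) (hqp : q ≠ p)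
      (hd : Tendsto (fun n => ‖x n - p‖) atTop (𝓝 d))
      (he : Tendsto (fun n => ‖x n - q‖) atTop (𝓝 e)) : d < e := by
    rw [← (hd.comp hφ).liminf_eq, ← (he.comp hφ).liminf_eq]
    exact hOpial (x ∘ φ) p hw q hqp
  obtain ⟨p, φ, hφ, hpw, hpK⟩ := UniformConvexSpace.exists_weakly_convergent_subseq hB
  have hpC := hpK C hCcl hCcv hxC
  have hTp := hdemi hφ.tendsto_atTop hpC hpw
  refine ⟨p, hpC, hTp, fun f => tendsto_of_subseq_tendsto fun ns hns => ?_⟩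
  obtain ⟨q, ψ, hψ, hqw, hqK⟩ :=
    UniformConvexSpace.exists_weakly_convergent_subseq fun n => hB (ns n)
  have hqC := hqK C hCcl hCcv fun n => hxC _
  have hnψ : Tendsto (fun n => ns (ψ n)) atTop atTop := hns.comp hψ.tendsto_atTop
  have hTq := hdemi hnψ hqC hqw
  have hqp : q = p := by
    by_contra hne
    obtain ⟨d, -, hd⟩ := hlimit hpC hTp
    obtain ⟨e, -, he⟩ := hlimit hqC hTq
    exact lt_asymm (hlt hφ.tendsto_atTop hpw hne hd he) (hlt hnψ hqw (Ne.symm hne) he hd)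
  exact ⟨ψ, hqp ▸ hqw f⟩
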